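/- Let ABC be an acute triangle with side lengths a < b < c, and let T' be a minimum area isosceles container for ABC. Then T' is an obtuse triangle if and only if T' equals (as a convex set) one of the special containers of the second kind AB₁C, ABC₁, ABC₂. -/

import Mathlib

/-!
A similarity which maps the triangle `T` into its minimum area container `T'` cannot enlarge areas,
since its inverse would map `T'` to a smaller container. Perturbing the identity, one finds that
every side of `T'` contains a vertex of `T` and that some side contains two of them.

Two explicit containers bound the area of `T'`: the shorter of two sides of `T` can be extended to
the length of the longer one, and if `V W ≤ V U`, then `W` lies on the base of the special container
of the second kind with apex `V` and leg `V U`. In oblique coordinates along the legs of `T'` these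
bounds show that, when the apex angle of `T'` is at least `π / 2`, the apex and an endpoint of the
base are vertices of `T` while the third vertex of `T` lies on the base. So `T'` is of the second
kind, and `a < b < c` leaves only three possibilities.

Conversely, extending the side `b` to the length `c` gives less area than the special containers
with legs of length `c`. The one with legs of length `b` has at most the area obtained by extending
`a` to the length `b` only if `a (a + b) ≤ c ^ 2`, and then its apex angle is obtuse.
-/

open EuclideanGeometry MeasureTheory Real

noncomputable section

/-- The Euclidean plane. -/
abbrev Pt : Type := EuclideanSpace ℝ (Fin 2)

/-- The closed triangular region with vertices `A`, `B`, `C`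
(the convex hull of the three vertices). -/
def tri (A B C : Pt) : Set Pt := convexHull ℝ {A, B, C}

/-- The area of the triangle `A B C`:
the 2-dimensional Lebesgue measure of its convex hull. -/
def triArea (A B C : Pt) : ℝ := (volume (tri A B C)).toReal

/-- A triangle is isosceles if at least two of its side lengths coincide. -/
def IsIsosceles (A B C : Pt) : Prop :=
  dist B C = dist C A ∨ dist C A = dist A B ∨ dist A B = dist B C

/-- `S P R` is an isosceles container for the triangle `A B C`:
it is a genuine isosceles triangle whose convex hull contains that of `A B C`. -/
def IsIsoscelesContainer (A B C S P R : Pt) : Prop :=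
  AffineIndependent ℝ ![S, P, R] ∧ IsIsosceles S P R ∧ tri A B C ⊆ tri S P R

/-- `S P R` is a minimum area isosceles container for the triangle `A B C`. -/
def IsMinIsoscelesContainer (A B C S P R : Pt) : Prop :=
  IsIsoscelesContainer A B C S P R ∧
    ∀ S' P' R' : Pt, IsIsoscelesContainer A B C S' P' R' →
      triArea S P R ≤ triArea S' P' R'

/-- `Z` lies on the ray starting at `X` passing through `Y`. -/
def OnRay (X Y Z : Pt) : Prop := SameRay ℝ (Y - X) (Z - X)

/-! ### Signed area -/

/-- Twice the signed area of the triangle `A B C`. -/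
def cross (A B C : Pt) : ℝ := (B 0 - A 0) * (C 1 - A 1) - (B 1 - A 1) * (C 0 - A 0)

lemma cross_swap_left (A B C : Pt) : cross B A C = -cross A B C := by
  simp only [cross]; ring

lemma cross_swap_right (A B C : Pt) : cross A C B = -cross A B C := by
  simp only [cross]; ring

lemma dist_sq_eq_coords (A B : Pt) : dist A B ^ 2 = (A 0 - B 0) ^ 2 + (A 1 - B 1) ^ 2 := by
  rw [EuclideanSpace.dist_sq_eq, Fin.sum_univ_two, Real.dist_eq, Real.dist_eq, sq_abs, sq_abs]

lemma inner_eq_coords (x y : Pt) : inner ℝ x y = x 0 * y 0 + x 1 * y 1 := by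
  simp [EuclideanSpace.inner_eq_star_dotProduct, dotProduct, Fin.sum_univ_two, mul_comm]

lemma triArea_pos {A B C : Pt} (h : AffineIndependent ℝ ![A, B, C]) : 0 < triArea A B C := by
  have hspan : affineSpan ℝ (Set.range ![A, B, C]) = ⊤ :=
    h.affineSpan_eq_top_iff_card_eq_finrank_add_one.2 (by simp)
  simp only [Matrix.range_cons, Matrix.range_empty, Set.union_empty, Set.singleton_union] at hspan
  have hpos : 0 < volume (tri A B C) :=
    (isOpen_interior.measure_pos volume
      (interior_convexHull_nonempty_iff_affineSpan_eq_top.2 hspan)).trans_le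
      (measure_mono interior_subset)
  have hfin : volume (tri A B C) < ⊤ :=
    (isBounded_convexHull.2 (Set.toFinite _).isBounded).measure_lt_top
  exact ENNReal.toReal_pos hpos.ne' hfin.ne

lemma triArea_eq_abs_cross_mul (S P R : Pt) :
    triArea S P R = |cross S P R| * triArea 0 !₂[1, 0] !₂[0, 1] := by
  set b := (EuclideanSpace.basisFun (Fin 2) ℝ).toBasis with hb
  have hb0 : b 0 = !₂[1, 0] := by ext i; fin_cases i <;> simp [hb]
  have hb1 : b 1 = !₂[0, 1] := by ext i; fin_cases i <;> simp [hb]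
  set f : Pt →ₗ[ℝ] Pt := Matrix.toLin b b !![P 0 - S 0, R 0 - S 0; P 1 - S 1, R 1 - S 1] with hf
  have hf0 : f (b 0) = P - S := by
    rw [hf, Matrix.toLin_self, Fin.sum_univ_two]
    ext i
    fin_cases i <;> simp [hb]
  have hf1 : f (b 1) = R - S := by
    rw [hf, Matrix.toLin_self, Fin.sum_univ_two]
    ext i
    fin_cases i <;> simp [hb]
  have himage : tri S P R = (fun x => S + x) '' (f '' tri 0 (b 0) (b 1)) := by
    rw [tri, tri, LinearMap.image_convexHull,
      show (fun x => S + x) = (AffineEquiv.constVAdd ℝ Pt S).toAffineMap by ext; simp,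
      AffineMap.image_convexHull]
    simp [Set.image_insert_eq, hf0, hf1]
  have hdet : LinearMap.det f = cross S P R := by
    rw [hf, LinearMap.det_toLin, Matrix.det_fin_two_of, cross]
    ring
  rw [← hb0, ← hb1, triArea, himage, Set.image_add_left, measure_preimage_add,
    Measure.addHaar_image_linearMap, hdet, ENNReal.toReal_mul,
    ENNReal.toReal_ofReal (abs_nonneg _), triArea]

lemma affineIndependent_iff_cross_ne_zero {A B C : Pt} :
    AffineIndependent ℝ ![A, B, C] ↔ cross A B C ≠ 0 := by
  refine ⟨fun h h0 => (triArea_pos h).ne' (by rw [triArea_eq_abs_cross_mul, h0]; simp), ?_⟩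
  intro h0
  rw [affineIndependent_iff_not_collinear_set, collinear_iff_of_mem (p₀ := A) (by simp)]
  rintro ⟨v, hv⟩
  obtain ⟨x, hx⟩ := hv B (by simp)
  obtain ⟨y, hy⟩ := hv C (by simp)
  apply h0
  simp only [hx, hy, cross, vadd_eq_add, PiLp.add_apply, PiLp.smul_apply, smul_eq_mul]
  ring

lemma triArea_le_triArea_iff {S P R S' P' R' : Pt} :
    triArea S P R ≤ triArea S' P' R' ↔ |cross S P R| ≤ |cross S' P' R'| := by
  have hpos : 0 < triArea 0 !₂[1, 0] !₂[0, 1] :=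
    triArea_pos (affineIndependent_iff_cross_ne_zero.2 (by simp [cross]))
  rw [triArea_eq_abs_cross_mul S, triArea_eq_abs_cross_mul S', mul_le_mul_iff_left₀ hpos]

/-! ### Isosceles containers -/

lemma tri_subset_tri_iff {A B C S P R : Pt} :
    tri A B C ⊆ tri S P R ↔ A ∈ tri S P R ∧ B ∈ tri S P R ∧ C ∈ tri S P R := by
  rw [tri, tri, (convex_convexHull ℝ _).convexHull_subset_iff]
  simp [Set.insert_subset_iff]

lemma tri_swap_left (S P R : Pt) : tri P S R = tri S P R := by rw [tri, tri, Set.insert_comm]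

lemma tri_swap_right (S P R : Pt) : tri S R P = tri S P R := by rw [tri, tri, Set.pair_comm]

lemma left_mem_tri (S P R : Pt) : S ∈ tri S P R := subset_convexHull ℝ _ (by simp)

lemma mid_mem_tri (S P R : Pt) : P ∈ tri S P R := subset_convexHull ℝ _ (by simp)

lemma segment_subset_tri (S P R : Pt) : segment ℝ P R ⊆ tri S P R :=
  segment_subset_convexHull (by simp) (by simp)

lemma affineIndependent_swap_left {A B C : Pt} :
    AffineIndependent ℝ ![B, A, C] ↔ AffineIndependent ℝ ![A, B, C] := by
  simp only [affineIndependent_iff_cross_ne_zero, cross_swap_left A, neg_ne_zero]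

lemma affineIndependent_swap_right {A B C : Pt} :
    AffineIndependent ℝ ![A, C, B] ↔ AffineIndependent ℝ ![A, B, C] := by
  simp only [affineIndependent_iff_cross_ne_zero, cross_swap_right A B, neg_ne_zero]

lemma isIsosceles_swap_left {A B C : Pt} : IsIsosceles B A C ↔ IsIsosceles A B C := by
  unfold IsIsosceles
  rw [dist_comm A C, dist_comm C B, dist_comm B A]
  grind

lemma isIsosceles_swap_right {A B C : Pt} : IsIsosceles A C B ↔ IsIsosceles A B C := by
  unfold IsIsosceles
  rw [dist_comm A C, dist_comm C B, dist_comm B A]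
  grind

lemma isIsosceles_of_apex {A B C : Pt} (h : dist B A = dist B C) : IsIsosceles A B C :=
  Or.inr (Or.inr (by rw [dist_comm A B, h]))

namespace IsMinIsoscelesContainer

variable {A B C U V W S P R S' P' R' : Pt}

lemma congr (h : IsMinIsoscelesContainer A B C S P R) (hUVW : ({U, V, W} : Set Pt) = {A, B, C}) :
    IsMinIsoscelesContainer U V W S P R := by
  have htri : tri U V W = tri A B C := by rw [tri, tri, hUVW]
  simpa only [IsMinIsoscelesContainer, IsIsoscelesContainer, htri] using h

lemma swap_left (h : IsMinIsoscelesContainer A B C S P R) :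
    IsMinIsoscelesContainer A B C P S R :=
  ⟨⟨affineIndependent_swap_left.2 h.1.1, isIsosceles_swap_left.2 h.1.2.1,
    (tri_swap_left S P R).symm ▸ h.1.2.2⟩, by simpa only [triArea, tri_swap_left S P R] using h.2⟩

lemma swap_right (h : IsMinIsoscelesContainer A B C S P R) :
    IsMinIsoscelesContainer A B C S R P :=
  ⟨⟨affineIndependent_swap_right.2 h.1.1, isIsosceles_swap_right.2 h.1.2.1,
    (tri_swap_right S P R).symm ▸ h.1.2.2⟩, by simpa only [triArea, tri_swap_right S P R] using h.2⟩

lemma abs_cross_le (h : IsMinIsoscelesContainer A B C S P R)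
    (h' : IsIsoscelesContainer A B C S' P' R') : |cross S P R| ≤ |cross S' P' R'| :=
  triArea_le_triArea_iff.1 (h.2 S' P' R' h')

end IsMinIsoscelesContainer

/-! ### Extending a side -/

lemma cross_lineMap_right (U V W : Pt) (τ : ℝ) :
    cross U V (AffineMap.lineMap V W τ) = τ * cross U V W := by
  simp only [cross, AffineMap.lineMap_apply_module, PiLp.add_apply, PiLp.smul_apply, smul_eq_mul]
  ring

lemma mem_segment_lineMap {E : Type*} [AddCommGroup E] [Module ℝ E] {V W : E} {τ : ℝ} (hτ : 1 ≤ τ) :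
    W ∈ segment ℝ V (AffineMap.lineMap V W τ) := by
  have hτ0 : τ ≠ 0 := by positivity
  rw [segment_eq_image_lineMap]
  refine ⟨τ⁻¹, ⟨by positivity, inv_le_one_of_one_le₀ hτ⟩, ?_⟩
  rw [AffineMap.lineMap_lineMap_right, inv_mul_cancel₀ hτ0, AffineMap.lineMap_apply_one]

/-- The second point, besides `U`, of the line `U W` on the circle around `V` through `U`: the new
vertex of the special container of the second kind of the triangle `U V W` which has apex `V`
and keeps the side `V U`. -/
def secondKindVertex (U V W : Pt) : Pt := Sphere.secondInter ⟨V, dist U V⟩ U (W -ᵥ U)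

lemma dist_secondKindVertex (U V W : Pt) : dist (secondKindVertex U V W) V = dist U V :=
  Sphere.secondInter_dist _ _ _

lemma secondKindVertex_eq_lineMap (U V W : Pt) :
    secondKindVertex U V W = AffineMap.lineMap U W
      ((dist V U ^ 2 + dist W U ^ 2 - dist V W ^ 2) / dist W U ^ 2) := by
  rw [secondKindVertex, Sphere.secondInter_eq_lineMap]
  simp only [vsub_eq_sub, inner_eq_coords, dist_sq_eq_coords, PiLp.sub_apply]
  congr 2 <;> ring

lemma OnRay.eq_secondKindVertex {U V W Z : Pt} (h : OnRay U W Z) (hWU : W ≠ U) (hZU : Z ≠ U)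
    (hdist : dist Z V = dist U V) : Z = secondKindVertex U V W := by
  obtain ⟨τ, -, hτ⟩ := h.exists_nonneg_left (sub_ne_zero.2 hWU)
  have hZ : Z ∈ AffineSubspace.mk' U (ℝ ∙ (W -ᵥ U)) :=
    AffineSubspace.mem_mk'.2 (Submodule.mem_span_singleton.2 ⟨τ, hτ⟩)
  have hU : U ∈ (⟨V, dist U V⟩ : Sphere Pt) := rfl
  exact ((Sphere.eq_or_eq_secondInter_of_mem_mk'_span_singleton_iff_mem hU hZ).2 hdist).resolve_left
    hZU

namespace IsMinIsoscelesContainer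

variable {U V W S P R : Pt}

lemma abs_cross_le_of_lineMap (h : IsMinIsoscelesContainer U V W S P R)
    (hUVW : AffineIndependent ℝ ![U, V, W]) {τ : ℝ} (hτ : 1 ≤ τ)
    (hiso : IsIsosceles U V (AffineMap.lineMap V W τ)) : |cross S P R| ≤ τ * |cross U V W| := by
  have hτ0 : 0 < τ := by positivity
  rw [← abs_of_pos hτ0, ← abs_mul, ← cross_lineMap_right]
  refine h.abs_cross_le ⟨?_, hiso, tri_subset_tri_iff.2 ⟨left_mem_tri _ _ _, mid_mem_tri _ _ _,
    segment_subset_tri _ _ _ (mem_segment_lineMap hτ)⟩⟩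
  rw [affineIndependent_iff_cross_ne_zero] at hUVW ⊢
  rw [cross_lineMap_right]
  exact mul_ne_zero hτ0.ne' hUVW

/-- Extending the shorter of two sides to the length of the longer one gives a container. -/
lemma abs_cross_mul_dist_le (h : IsMinIsoscelesContainer U V W S P R)
    (hUVW : AffineIndependent ℝ ![U, V, W]) (hle : dist V W ≤ dist V U) :
    |cross S P R| * dist V W ≤ |cross U V W| * dist V U := by
  have hVW : 0 < dist V W := dist_pos.2 (hUVW.injective.ne (show (1 : Fin 3) ≠ 2 by decide))
  have hbound := h.abs_cross_le_of_lineMap hUVW ((one_le_div₀ hVW).2 hle) <|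
    isIsosceles_of_apex <| by
      rw [dist_left_lineMap, Real.norm_of_nonneg (by positivity), div_mul_cancel₀ _ hVW.ne']
  rwa [div_mul_eq_mul_div, le_div_iff₀ hVW, mul_comm (dist V U)] at hbound

/-- The special container of the second kind with apex `V` contains `W`, since `W` is at most as
far from `V` as `U` is. -/
lemma abs_cross_mul_dist_sq_le (h : IsMinIsoscelesContainer U V W S P R)
    (hUVW : AffineIndependent ℝ ![U, V, W]) (hle : dist V W ≤ dist V U) :
    |cross S P R| * dist W U ^ 2 ≤
      |cross U V W| * (dist V U ^ 2 + dist W U ^ 2 - dist V W ^ 2) := by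
  have hWU : 0 < dist W U := dist_pos.2 (hUVW.injective.ne (show (2 : Fin 3) ≠ 0 by decide))
  have hτ : 1 ≤ (dist V U ^ 2 + dist W U ^ 2 - dist V W ^ 2) / dist W U ^ 2 := by
    have hsq : dist V W ^ 2 ≤ dist V U ^ 2 := by gcongr
    rw [one_le_div₀ (by positivity)]
    linarith
  have hbound := (h.congr (Set.insert_comm V U {W})).abs_cross_le_of_lineMap
    (affineIndependent_swap_left.2 hUVW) hτ <| by
      rw [← secondKindVertex_eq_lineMap]
      exact Or.inr (Or.inl (by rw [dist_secondKindVertex, dist_comm]))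
  rwa [cross_swap_left U V W, abs_neg, div_mul_eq_mul_div, le_div_iff₀ (by positivity),
    mul_comm (_ - _)] at hbound

end IsMinIsoscelesContainer

/-! ### Moving a finite set inside a simplex -/

section AffineBasis

variable {ι V : Type*} [AddCommGroup V] [Module ℝ V] (b : AffineBasis ι ℝ V)

lemma affineBasis_coord_add (i : ι) (x v : V) :
    b.coord i (x + v) = b.coord i x + (b.coord i).linear v := by
  rw [add_comm x, ← vadd_eq_add, AffineMap.map_vadd, vadd_eq_add, add_comm]

lemma mem_extremePoints_convexHull [Finite ι] (i : ι) :
    b i ∈ (convexHull ℝ (Set.range b)).extremePoints ℝ := by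
  rw [mem_extremePoints_iff_left, b.convexHull_eq_nonneg_coord]
  classical
  refine ⟨fun j => ?_, fun x hx y hy ⟨t, u, ht, hu, htu, hxy⟩ => ?_⟩
  · rw [b.coord_apply]
    split_ifs <;> norm_num
  have hcoord : ∀ j ≠ i, b.coord j x = 0 := by
    intro j hj
    have hsum : t * b.coord j x + u * b.coord j y = 0 := by
      rw [← b.coord_apply_ne hj, ← hxy]
      exact (Convex.combo_affine_apply htu).symm
    have hzero := (add_eq_zero_iff_of_nonneg (mul_nonneg ht.le (hx j))
      (mul_nonneg hu.le (hy j))).1 hsum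
    exact (mul_eq_zero.1 hzero.1).resolve_left ht.ne'
  have := Fintype.ofFinite ι
  have hone : b.coord i x = 1 := by
    rw [← b.sum_coord_apply_eq_one x, Finset.sum_eq_single i (fun j _ => hcoord j) (by simp)]
  refine b.ext_elem fun j => ?_
  rw [b.coord_apply]
  split_ifs with h
  · rw [h, hone]
  · exact hcoord j h

variable {b} {K : Set V}

/-- Only the facets through a point restrict the directions in which it can be moved. -/
lemma exists_pos_forall_add_smul_mem [Finite ι] (hK : K.Finite)
    (hKb : K ⊆ convexHull ℝ (Set.range b)) {v : V → V}
    (hv : ∀ x ∈ K, ∀ i, b.coord i x = 0 → 0 ≤ (b.coord i).linear (v x)) :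
    ∃ ε : ℝ, 0 < ε ∧ ∀ x ∈ K, x + ε • v x ∈ convexHull ℝ (Set.range b) := by
  rw [b.convexHull_eq_nonneg_coord] at hKb ⊢
  have hev : ∀ᶠ ε in nhdsWithin (0 : ℝ) (Set.Ioi 0), ∀ x ∈ K, ∀ i,
      0 ≤ b.coord i (x + ε • v x) := by
    rw [Filter.eventually_all_finite hK]
    refine fun x hx => Filter.eventually_all.2 fun i => ?_
    simp only [affineBasis_coord_add, map_smul, smul_eq_mul]
    rcases (hKb hx i).eq_or_lt' with h0 | hpos
    · filter_upwards [self_mem_nhdsWithin] with ε hε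
      rw [h0, zero_add]
      exact mul_nonneg (le_of_lt hε) (hv x hx i h0)
    · have hcont : ContinuousAt (fun ε => b.coord i x + ε * (b.coord i).linear (v x)) 0 := by
        fun_prop
      exact ((hcont.eventually_const_lt (by simpa using hpos)).mono fun _ => le_of_lt).filter_mono
        nhdsWithin_le_nhds
  obtain ⟨ε, hmem, hε⟩ := (hev.and self_mem_nhdsWithin).exists
  exact ⟨ε, hε, hmem⟩

lemma exists_pos_forall_add_smul_sub_mem [Finite ι] (hK : K.Finite)
    (hKb : K ⊆ convexHull ℝ (Set.range b)) {i : ι} (hi : ∀ x ∈ K, b.coord i x ≠ 0) :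
    ∃ ε : ℝ, 0 < ε ∧ ∀ x ∈ K, x + ε • (x - b i) ∈ convexHull ℝ (Set.range b) := by
  refine exists_pos_forall_add_smul_mem hK hKb fun x hx j hj => ?_
  have hji : j ≠ i := by
    rintro rfl
    exact hi x hx hj
  rw [← vsub_eq_sub, AffineMap.linearMap_vsub, hj, b.coord_apply_ne hji, vsub_self]

/-- A translation can be chosen so as to cancel a given velocity at the contact points of all
facets but one; the sign of the motion takes care of the last facet. -/
lemma exists_ne_zero_forall_add_smul_mem [Finite ι] (hK : K.Finite)
    (hKb : K ⊆ convexHull ℝ (Set.range b)) {y : ι → V}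
    (hy : ∀ x ∈ K, ∀ i, b.coord i x = 0 → x = y i) (f : V → V) :
    ∃ (w : V) (ε : ℝ), ε ≠ 0 ∧ ∀ x ∈ K, x + ε • (f x + w) ∈ convexHull ℝ (Set.range b) := by
  classical
  have := Fintype.ofFinite ι
  obtain ⟨i₀⟩ := b.nonempty
  set w : V := ∑ j, (b.coord j).linear (f (y j)) • (b i₀ - b j) with hw
  have hcancel : ∀ i ≠ i₀, (b.coord i).linear (f (y i) + w) = 0 := by
    intro i hi
    have hterm : ∀ j, (b.coord i).linear (b i₀ - b j) = if i = j then -1 else 0 := by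
      intro j
      rw [← vsub_eq_sub, AffineMap.linearMap_vsub, b.coord_apply, b.coord_apply, if_neg hi]
      split_ifs <;> simp
    simp only [map_add, hw, map_sum, map_smul, hterm, smul_eq_mul, mul_ite, mul_neg, mul_one,
      mul_zero, Finset.sum_ite_eq, Finset.mem_univ, if_true, add_neg_cancel]
  rcases le_total 0 ((b.coord i₀).linear (f (y i₀) + w)) with hsign | hsign
  · obtain ⟨ε, hε, hmem⟩ := exists_pos_forall_add_smul_mem (v := fun x => f x + w) hK hKb
      fun x hx i hi => by
        obtain rfl := hy x hx i hi
        by_cases h : i = i₀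
        · exact h ▸ hsign
        · exact (hcancel i h).ge
    exact ⟨w, ε, hε.ne', hmem⟩
  · obtain ⟨ε, hε, hmem⟩ := exists_pos_forall_add_smul_mem (v := fun x => -(f x + w)) hK hKb
      fun x hx i hi => by
        obtain rfl := hy x hx i hi
        rw [map_neg, neg_nonneg]
        by_cases h : i = i₀
        · exact h ▸ hsign
        · exact (hcancel i h).le
    exact ⟨w, -ε, neg_ne_zero.2 hε.ne', by simpa only [neg_smul, smul_neg] using hmem⟩

end AffineBasis

/-! ### Similar copies of the container -/

/-- Rotation by a right angle, which generates the rotations about the origin infinitesimally. -/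
def quarterTurn : Pt →ₗ[ℝ] Pt where
  toFun x := !₂[-x 1, x 0]
  map_add' x y := by ext i; fin_cases i <;> simp [add_comm]
  map_smul' a x := by ext i; fin_cases i <;> simp

/-- The direct similarity `x ↦ (α + i β) x + w` of the plane, which scales areas by `α² + β²`. -/
def spiral (α β : ℝ) (w : Pt) : Pt →ᵃ[ℝ] Pt :=
  (α • LinearMap.id + β • quarterTurn).toAffineMap + AffineMap.const ℝ Pt w

section Spiral

variable (α β : ℝ) (w : Pt)

lemma spiral_apply (x : Pt) : spiral α β w x = α • x + β • quarterTurn x + w := rfl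

lemma spiral_apply_zero (x : Pt) : spiral α β w x 0 = α * x 0 - β * x 1 + w 0 := by
  simp [spiral_apply, quarterTurn, sub_eq_add_neg]

lemma spiral_apply_one (x : Pt) : spiral α β w x 1 = α * x 1 + β * x 0 + w 1 := by
  simp [spiral_apply, quarterTurn]

lemma cross_spiral (A B C : Pt) :
    cross (spiral α β w A) (spiral α β w B) (spiral α β w C) = (α ^ 2 + β ^ 2) * cross A B C := by
  simp only [cross, spiral_apply_zero, spiral_apply_one]
  ring

lemma dist_spiral (x y : Pt) :
    dist (spiral α β w x) (spiral α β w y) = √(α ^ 2 + β ^ 2) * dist x y := by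
  rw [← Real.sqrt_sq dist_nonneg, ← Real.sqrt_sq (dist_nonneg (x := x)),
    ← Real.sqrt_mul (by positivity)]
  simp only [dist_sq_eq_coords, spiral_apply_zero, spiral_apply_one]
  ring_nf

lemma spiral_mem_tri {A B C x : Pt} (hx : x ∈ tri A B C) :
    spiral α β w x ∈ tri (spiral α β w A) (spiral α β w B) (spiral α β w C) := by
  have hmem := Set.mem_image_of_mem (spiral α β w) hx
  rwa [tri, AffineMap.image_convexHull, Set.image_insert_eq, Set.image_pair] at hmem

end Spiral

lemma exists_spiral_leftInverse {α β : ℝ} (h : α ^ 2 + β ^ 2 ≠ 0) (w : Pt) :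
    ∃ (α' β' : ℝ) (w' : Pt), (α' ^ 2 + β' ^ 2) * (α ^ 2 + β ^ 2) = 1 ∧
      Function.LeftInverse (spiral α' β' w') (spiral α β w) := by
  refine ⟨α / (α ^ 2 + β ^ 2), -β / (α ^ 2 + β ^ 2),
    -spiral (α / (α ^ 2 + β ^ 2)) (-β / (α ^ 2 + β ^ 2)) 0 w, by field_simp, fun x => ?_⟩
  ext i
  fin_cases i <;>
  · simp only [Fin.zero_eta, Fin.mk_one, spiral_apply_zero, spiral_apply_one, PiLp.neg_apply,
      PiLp.zero_apply]
    field_simp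
    ring

/-- The vertices of the triangle `S P R` as an affine basis: its coordinates are the barycentric
coordinates, and the coordinates `0`, `1`, `2` vanish on the lines `P R`, `S R`, `S P`. -/
def triBasis {S P R : Pt} (h : AffineIndependent ℝ ![S, P, R]) : AffineBasis (Fin 3) ℝ Pt :=
  ⟨![S, P, R], h, h.affineSpan_eq_top_iff_card_eq_finrank_add_one.2 (by simp)⟩

lemma convexHull_range_triBasis {S P R : Pt} (h : AffineIndependent ℝ ![S, P, R]) :
    convexHull ℝ (Set.range (triBasis h)) = tri S P R := by
  change convexHull ℝ (Set.range ![S, P, R]) = tri S P R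
  simp only [tri, Matrix.range_cons, Matrix.range_empty, Set.singleton_union, Set.union_empty]

lemma spiral_one_add (ε β : ℝ) (w x : Pt) :
    spiral (1 + ε) β w x = x + (ε • x + β • quarterTurn x + w) := by
  rw [spiral_apply]
  module

namespace IsMinIsoscelesContainer

variable {A B C S P R : Pt}

lemma sq_add_sq_le_one (h : IsMinIsoscelesContainer A B C S P R) {α β : ℝ} {w : Pt}
    (hmem : ∀ x ∈ ({A, B, C} : Set Pt), spiral α β w x ∈ tri S P R) : α ^ 2 + β ^ 2 ≤ 1 := by
  by_contra! hgt
  obtain ⟨α', β', w', hinv, hleft⟩ :=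
    exists_spiral_leftInverse (zero_lt_one.trans hgt).ne' w
  have hm : 0 < α' ^ 2 + β' ^ 2 :=
    pos_of_mul_pos_left (hinv.symm ▸ zero_lt_one) (zero_lt_one.trans hgt).le
  have hcross := affineIndependent_iff_cross_ne_zero.1 h.1.1
  have hback : ∀ x ∈ ({A, B, C} : Set Pt),
      x ∈ tri (spiral α' β' w' S) (spiral α' β' w' P) (spiral α' β' w' R) := fun x hx =>
    hleft x ▸ spiral_mem_tri α' β' w' (hmem x hx)
  have hle := h.abs_cross_le (S' := spiral α' β' w' S) (P' := spiral α' β' w' P)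
    (R' := spiral α' β' w' R) ⟨?_, ?_, convexHull_min hback (convex_convexHull ℝ _)⟩
  · rw [cross_spiral, abs_mul, abs_of_pos hm] at hle
    nlinarith [abs_pos.2 hcross]
  · rw [affineIndependent_iff_cross_ne_zero, cross_spiral]
    exact mul_ne_zero hm.ne' hcross
  · simpa only [IsIsosceles, dist_spiral, mul_right_inj' (Real.sqrt_pos.2 hm).ne'] using h.1.2.1

lemma subset_convexHull_triBasis (h : IsMinIsoscelesContainer A B C S P R) :
    {A, B, C} ⊆ convexHull ℝ (Set.range (triBasis h.1.1)) :=
  (subset_convexHull ℝ _).trans (h.1.2.2.trans (convexHull_range_triBasis h.1.1).superset)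

/-- Otherwise the triangle could be enlarged by a homothety around the vertex opposite to the
side. -/
lemma exists_mem_side (h : IsMinIsoscelesContainer A B C S P R) (i : Fin 3) :
    ∃ x ∈ ({A, B, C} : Set Pt), (triBasis h.1.1).coord i x = 0 := by
  by_contra! hne
  obtain ⟨ε, hε, hmem⟩ :=
    exists_pos_forall_add_smul_sub_mem (Set.toFinite _) h.subset_convexHull_triBasis hne
  have hle := h.sq_add_sq_le_one (α := 1 + ε) (β := 0) (w := -(ε • triBasis h.1.1 i))
    fun x hx => (convexHull_range_triBasis h.1.1).subset <| by
      rw [spiral_one_add, zero_smul, add_zero, ← sub_eq_add_neg, ← smul_sub]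
      exact hmem x hx
  nlinarith

/-- Otherwise the triangle could be turned inside the container by a map `x ↦ (1 + i ε) x + w`,
which enlarges it. -/
lemma exists_two_mem_side (h : IsMinIsoscelesContainer A B C S P R) :
    ∃ i, ∃ x ∈ ({A, B, C} : Set Pt), ∃ y ∈ ({A, B, C} : Set Pt), x ≠ y ∧
      (triBasis h.1.1).coord i x = 0 ∧ (triBasis h.1.1).coord i y = 0 := by
  by_contra! hne
  choose y hy hy0 using h.exists_mem_side
  obtain ⟨w, ε, hε, hmem⟩ :=
    exists_ne_zero_forall_add_smul_mem (Set.toFinite _) h.subset_convexHull_triBasis (y := y)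
      (fun x hx i hi => by_contra fun hxy => hne i x hx (y i) (hy i) hxy hi (hy0 i)) quarterTurn
  have hle := h.sq_add_sq_le_one (α := 1 + 0) (β := ε) (w := ε • w) fun x hx =>
    (convexHull_range_triBasis h.1.1).subset <| by
      rw [spiral_one_add, zero_smul, zero_add, ← smul_add]
      exact hmem x hx
  nlinarith [sq_pos_of_ne_zero hε]

end IsMinIsoscelesContainer

/-! ### Oblique coordinates along the legs -/

/-- The point with coordinates `(a, k)` with respect to the origin `P` and the axes `P S`,
`P R`. -/
def obliquePt (S P R : Pt) (a k : ℝ) : Pt := P + (a • (S - P) + k • (R - P))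

section ObliquePt

variable {S P R : Pt} (a k a' k' a'' k'' : ℝ)

lemma obliquePt_swap : obliquePt R P S k a = obliquePt S P R a k := by
  rw [obliquePt, obliquePt, add_comm (k • _)]

lemma obliquePt_zero_zero : obliquePt S P R 0 0 = P := by simp [obliquePt]

lemma obliquePt_one_zero : obliquePt S P R 1 0 = S := by simp [obliquePt]

lemma obliquePt_zero_one : obliquePt S P R 0 1 = R := by simp [obliquePt]

lemma dist_obliquePt_sq (hleg : dist P S = dist P R) :
    dist (obliquePt S P R a k) (obliquePt S P R a' k') ^ 2 =
      dist P S ^ 2 * (a - a') ^ 2 + 2 * inner ℝ (S - P) (R - P) * (a - a') * (k - k') +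
        dist P S ^ 2 * (k - k') ^ 2 := by
  have hsq : dist P S ^ 2 = dist P R ^ 2 := by rw [hleg]
  simp only [dist_sq_eq_coords, inner_eq_coords, obliquePt, PiLp.add_apply, PiLp.sub_apply,
    PiLp.smul_apply, smul_eq_mul] at hsq ⊢
  linear_combination -(k - k') ^ 2 * hsq

lemma cross_obliquePt :
    cross (obliquePt S P R a k) (obliquePt S P R a' k') (obliquePt S P R a'' k'') =
      ((a - a') * (k'' - k) - (k - k') * (a'' - a)) * cross S P R := by
  simp only [cross, obliquePt, PiLp.add_apply, PiLp.sub_apply, PiLp.smul_apply, smul_eq_mul]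
  ring

lemma coord_obliquePt (h : AffineIndependent ℝ ![S, P, R]) (i : Fin 3) :
    (triBasis h).coord i (obliquePt S P R a k) = ![a, 1 - a - k, k] i := by
  have hlin : ∀ j, (triBasis h).coord i (triBasis h j) = if i = j then 1 else 0 :=
    (triBasis h).coord_apply i
  have hS := hlin 0
  have hP := hlin 1
  have hR := hlin 2
  change (triBasis h).coord i S = _ at hS
  change (triBasis h).coord i P = _ at hP
  change (triBasis h).coord i R = _ at hR
  rw [obliquePt, affineBasis_coord_add, map_add, map_smul, map_smul, ← vsub_eq_sub, ← vsub_eq_sub,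
    AffineMap.linearMap_vsub, AffineMap.linearMap_vsub, hS, hP, hR]
  fin_cases i
  · simp
  · simp only [Fin.mk_one, vsub_eq_sub, smul_eq_mul, if_true, if_neg one_ne_zero,
      if_neg (show (1 : Fin 3) ≠ 2 by decide)]
    change _ = 1 - a - k
    ring
  · simp

lemma exists_eq_obliquePt (h : AffineIndependent ℝ ![S, P, R]) (x : Pt) :
    ∃ a k, x = obliquePt S P R a k := by
  refine ⟨(triBasis h).coord 0 x, (triBasis h).coord 2 x, (triBasis h).ext_elem fun i => ?_⟩
  have hsum := (triBasis h).sum_coord_apply_eq_one x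
  rw [Fin.sum_univ_three] at hsum
  rw [coord_obliquePt]
  have hP : (triBasis h).coord 1 x = 1 - (triBasis h).coord 0 x - (triBasis h).coord 2 x := by
    linarith
  fin_cases i
  exacts [rfl, hP, rfl]

variable {a k}

lemma obliquePt_mem_tri_iff (h : AffineIndependent ℝ ![S, P, R]) :
    obliquePt S P R a k ∈ tri S P R ↔ 0 ≤ a ∧ 0 ≤ k ∧ a + k ≤ 1 := by
  rw [← convexHull_range_triBasis h, AffineBasis.convexHull_eq_nonneg_coord]
  simp only [Set.mem_ofPred_eq, coord_obliquePt]
  constructor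
  · intro hnonneg
    have hP : 0 ≤ 1 - a - k := hnonneg 1
    exact ⟨hnonneg 0, hnonneg 2, by linarith⟩
  · rintro ⟨ha, hk, hak⟩ i
    have hP : 0 ≤ 1 - a - k := by linarith
    fin_cases i
    exacts [ha, hP, hk]

lemma obliquePt_mem_segment (ha : 0 ≤ a) (hk : 0 ≤ k) (hak : a + k = 1) :
    obliquePt S P R a k ∈ segment ℝ S R := by
  refine ⟨a, k, ha, hk, hak, ?_⟩
  obtain rfl : a = 1 - k := by linarith
  rw [obliquePt]
  module

end ObliquePt

/-! ### Containers sharing a side line with the triangle -/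

namespace IsMinIsoscelesContainer

variable {U V W S P R : Pt} {δ : ℝ}

lemma affineIndependent_of_abs_cross (h : IsMinIsoscelesContainer U V W S P R) (hδ : 0 < δ)
    (hcross : |cross U V W| = δ * |cross S P R|) : AffineIndependent ℝ ![U, V, W] := by
  rw [affineIndependent_iff_cross_ne_zero, ← abs_pos, hcross]
  exact mul_pos hδ (abs_pos.2 (affineIndependent_iff_cross_ne_zero.1 h.1.1))

lemma dist_sq_le_of_abs_cross (h : IsMinIsoscelesContainer U V W S P R) (hδ : 0 < δ)
    (hcross : |cross U V W| = δ * |cross S P R|) (hle : dist V W ≤ dist V U) :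
    dist V W ^ 2 ≤ δ ^ 2 * dist V U ^ 2 := by
  have hbound := h.abs_cross_mul_dist_le (h.affineIndependent_of_abs_cross hδ hcross) hle
  rw [hcross, mul_comm δ, mul_assoc, mul_le_mul_iff_right₀
    (abs_pos.2 (affineIndependent_iff_cross_ne_zero.1 h.1.1))] at hbound
  rw [← mul_pow]
  gcongr

lemma dist_sq_le_mul_of_abs_cross (h : IsMinIsoscelesContainer U V W S P R) (hδ : 0 < δ)
    (hcross : |cross U V W| = δ * |cross S P R|) (hle : dist V W ≤ dist V U) :
    dist W U ^ 2 ≤ δ * (dist V U ^ 2 + dist W U ^ 2 - dist V W ^ 2) := by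
  have hbound := h.abs_cross_mul_dist_sq_le (h.affineIndependent_of_abs_cross hδ hcross) hle
  rwa [hcross, mul_comm δ, mul_assoc, mul_le_mul_iff_right₀
    (abs_pos.2 (affineIndependent_iff_cross_ne_zero.1 h.1.1))] at hbound

lemma eq_obliquePt_zero_of_mem_base {a k s s' : ℝ}
    (h : IsMinIsoscelesContainer (obliquePt S P R (1 - s) s) (obliquePt S P R a k)
      (obliquePt S P R (1 - s') s') S P R)
    (hleg : dist P S = dist P R) (hang : inner ℝ (S - P) (R - P) ≤ 0)
    (hs : s ∈ Set.Icc 0 1) (hss' : s ≠ s') (ha : 0 ≤ a) (hk : 0 ≤ k) (hak : a + k < 1)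
    (hle : dist (obliquePt S P R a k) (obliquePt S P R (1 - s') s') ≤
      dist (obliquePt S P R a k) (obliquePt S P R (1 - s) s)) :
    (a = 0 ∧ k = 0) ∧ (s = 0 ∨ s = 1) := by
  have hlen : 0 < dist P S ^ 2 :=
    pow_pos (dist_pos.2 (h.1.1.injective.ne (show (1 : Fin 3) ≠ 0 by decide))) 2
  have hη : 0 < 1 - a - k := by linarith
  have hd : 0 < |s' - s| := abs_pos.2 (sub_ne_zero.2 hss'.symm)
  have hcross : cross (obliquePt S P R (1 - s) s) (obliquePt S P R a k)
      (obliquePt S P R (1 - s') s') = (s' - s) * (1 - a - k) * cross S P R := by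
    rw [cross_obliquePt]
    ring
  have hbound := h.dist_sq_le_mul_of_abs_cross (mul_pos hd hη)
    (by rw [hcross, abs_mul, abs_mul, abs_of_pos hη]) hle
  set I := inner ℝ (S - P) (R - P)
  set X := (1 - a + k) / 2 - s with hX
  have hbase : 1 ≤ 2 * (1 - a - k) * |X| := by
    have hD : 0 < dist P S ^ 2 - I := by linarith
    have hpos : 0 < 2 * (dist P S ^ 2 - I) * |s' - s| ^ 2 := by positivity
    refine le_of_mul_le_mul_left ?_ hpos
    calc 2 * (dist P S ^ 2 - I) * |s' - s| ^ 2 * 1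
        ≤ |s' - s| * (1 - a - k) * (4 * (dist P S ^ 2 - I) * ((s' - s) * X)) := by
          simp only [dist_obliquePt_sq _ _ _ _ hleg] at hbound
          rw [sq_abs]
          convert hbound using 1 <;> ring
      _ ≤ |s' - s| * (1 - a - k) * (4 * (dist P S ^ 2 - I) * (|s' - s| * |X|)) := by
          have hprod : (s' - s) * X ≤ |s' - s| * |X| := (le_abs_self _).trans_eq (abs_mul _ _)
          gcongr
      _ = _ := by ring
  have hXle : |X| ≤ (1 + a + k) / 2 :=
    abs_le.2 ⟨by linarith [hs.2], by linarith [hs.1]⟩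
  obtain hak0 : a + k = 0 := by nlinarith
  obtain ⟨rfl, rfl⟩ : a = 0 ∧ k = 0 := ⟨by linarith, by linarith⟩
  refine ⟨⟨rfl, rfl⟩, ?_⟩
  rcases le_abs'.1 (show 1 / 2 ≤ |X| by linarith) with hX' | hX'
  · exact Or.inr (le_antisymm hs.2 (by linarith))
  · exact Or.inl (le_antisymm (by linarith) hs.1)

end IsMinIsoscelesContainer

lemma abs_cross_rev (U V W : Pt) : |cross W V U| = |cross U V W| := by
  rw [cross_swap_left V W, abs_neg, cross_swap_right V U, abs_neg, cross_swap_left, abs_neg]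

lemma inner_sq_add_cross_sq (S P R : Pt) :
    inner ℝ (S - P) (R - P) ^ 2 + cross S P R ^ 2 = dist P S ^ 2 * dist P R ^ 2 := by
  simp only [inner_eq_coords, cross, dist_sq_eq_coords, PiLp.sub_apply]
  ring

lemma abs_inner_lt_dist_sq {S P R : Pt} (h : AffineIndependent ℝ ![S, P, R])
    (hleg : dist P S = dist P R) :
    |inner ℝ (S - P) (R - P)| < dist P S ^ 2 := by
  have hcross := sq_pos_of_ne_zero (affineIndependent_iff_cross_ne_zero.1 h)
  have hsum := inner_sq_add_cross_sq S P R
  rw [← hleg] at hsum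
  exact abs_lt_of_sq_lt_sq (by linarith) (by positivity)

lemma abs_cross_obliquePt_leg {S P R : Pt} {c c' k : ℝ} (a : ℝ) (hcc' : c' ≤ c) (hk : 0 ≤ k) :
    |cross (obliquePt S P R c 0) (obliquePt S P R c' 0) (obliquePt S P R a k)| =
      (c - c') * k * |cross S P R| := by
  rw [cross_obliquePt, abs_mul, sub_self, zero_mul, sub_zero, sub_zero,
    abs_of_nonneg (mul_nonneg (sub_nonneg.2 hcc') hk)]

namespace IsMinIsoscelesContainer

variable {U V W S P R : Pt} {a c c' k : ℝ}

lemma rev (h : IsMinIsoscelesContainer U V W S P R) : IsMinIsoscelesContainer W V U S P R :=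
  h.congr (by rw [Set.insert_comm, Set.pair_comm, Set.insert_comm])

lemma leg_ineq_of_dist_le
    (h : IsMinIsoscelesContainer (obliquePt S P R c 0) (obliquePt S P R c' 0)
      (obliquePt S P R a k) S P R)
    (hleg : dist P S = dist P R) (hcc' : c' < c) (hk : 0 < k)
    (hle : dist (obliquePt S P R c' 0) (obliquePt S P R a k) ≤
      dist (obliquePt S P R c' 0) (obliquePt S P R c 0)) :
    dist P S ^ 2 * (c - a) ^ 2 - 2 * inner ℝ (S - P) (R - P) * (c - a) * k +
        dist P S ^ 2 * k ^ 2 ≤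
      2 * (c - c') ^ 2 * k * (dist P S ^ 2 * (c - a) - inner ℝ (S - P) (R - P) * k) := by
  have hbound := h.dist_sq_le_mul_of_abs_cross (mul_pos (sub_pos.2 hcc') hk)
    (abs_cross_obliquePt_leg a hcc'.le hk.le) hle
  simp only [dist_obliquePt_sq _ _ _ _ hleg] at hbound
  linarith

lemma leg_ineq_of_le_dist
    (h : IsMinIsoscelesContainer (obliquePt S P R c 0) (obliquePt S P R c' 0)
      (obliquePt S P R a k) S P R)
    (hleg : dist P S = dist P R) (hcc' : c' < c) (hk : 0 < k)
    (hle : dist (obliquePt S P R c' 0) (obliquePt S P R c 0) ≤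
      dist (obliquePt S P R c' 0) (obliquePt S P R a k)) :
    dist P S ^ 2 * (c - a) ^ 2 - 2 * inner ℝ (S - P) (R - P) * (c - a) * k +
        dist P S ^ 2 * k ^ 2 ≤
      2 * (c - c') * k * (dist P S ^ 2 * ((a - c') * (a - c) + k ^ 2) +
        inner ℝ (S - P) (R - P) * k * (2 * a - c - c')) := by
  have hbound := h.rev.dist_sq_le_mul_of_abs_cross (mul_pos (sub_pos.2 hcc') hk)
    ((abs_cross_rev _ _ _).trans (abs_cross_obliquePt_leg a hcc'.le hk.le)) hle
  simp only [dist_obliquePt_sq _ _ _ _ hleg] at hbound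
  linarith

end IsMinIsoscelesContainer

namespace IsMinIsoscelesContainer

variable {S P R : Pt} {a c c' k : ℝ}

lemma eq_zero_and_add_eq_one_of_leg_end
    (h : IsMinIsoscelesContainer (obliquePt S P R 1 0) (obliquePt S P R c' 0)
      (obliquePt S P R a k) S P R)
    (hleg : dist P S = dist P R) (hang : inner ℝ (S - P) (R - P) ≤ 0) (hc'0 : 0 ≤ c')
    (hc' : c' < 1) (hk : 0 < k) (hak : a + k ≤ 1)
    (hle : dist (obliquePt S P R c' 0) (obliquePt S P R a k) ≤
      dist (obliquePt S P R c' 0) (obliquePt S P R 1 0)) : c' = 0 ∧ a + k = 1 := by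
  have hE := (abs_nonneg _).trans_lt (abs_inner_lt_dist_sq h.1.1 hleg)
  have hineq := h.leg_ineq_of_dist_le hleg hc' hk hle
  set E := dist P S ^ 2
  set I := inner ℝ (S - P) (R - P)
  have hy : k ≤ 1 - a := by linarith
  have hpos : 0 < k * (E * (1 - a) - I * k) := by
    have := mul_pos hE (hk.trans_le hy)
    nlinarith
  have hIk : I * k * (1 - a - k) ≤ 0 :=
    mul_nonpos_of_nonpos_of_nonneg (mul_nonpos_of_nonpos_of_nonneg hang hk.le) (by linarith)
  have hd : (1 - c') ^ 2 ≤ 1 := by nlinarith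
  have hsq : E * (1 - a - k) ^ 2 ≤ 0 := by nlinarith
  have hak1 : 1 - a - k = 0 := by
    by_contra hne
    linarith [mul_pos hE (sq_pos_of_ne_zero hne)]
  have hd1 : 1 ≤ (1 - c') ^ 2 := by
    refine le_of_mul_le_mul_right ?_ hpos
    obtain rfl : a = 1 - k := by linarith
    linarith
  exact ⟨by nlinarith, by linarith⟩

lemma one_le_of_leg_apex
    (h : IsMinIsoscelesContainer (obliquePt S P R c 0) (obliquePt S P R 0 0)
      (obliquePt S P R (1 - k) k) S P R)
    (hleg : dist P S = dist P R) (hc0 : 0 < c) (hk : 0 < k)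
    (hle : dist (obliquePt S P R 0 0) (obliquePt S P R (1 - k) k) ≤
      dist (obliquePt S P R 0 0) (obliquePt S P R c 0)) : 1 ≤ c := by
  by_contra! hc
  have hEI := abs_lt.1 (abs_inner_lt_dist_sq h.1.1 hleg)
  have hineq := h.leg_ineq_of_dist_le hleg hc0 hk hle
  have hext := h.dist_sq_le_of_abs_cross (mul_pos (sub_pos.2 hc0) hk)
    (abs_cross_obliquePt_leg _ hc0.le hk.le) hle
  simp only [dist_obliquePt_sq _ _ _ _ hleg] at hext
  set E := dist P S ^ 2
  set I := inner ℝ (S - P) (R - P)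
  have hE : 0 < E := by linarith
  set m := (1 - k) * E + k * I with hm
  set r := (1 - k) ^ 2 * E + 2 * (1 - k) * k * I + k ^ 2 * E with hr
  have hdet : 0 < E * r - m ^ 2 := by
    have := mul_pos (sub_pos.2 hEI.2) (neg_lt_iff_pos_add'.1 hEI.1)
    rw [show E * r - m ^ 2 = k ^ 2 * ((E - I) * (E + I)) by rw [hr, hm]; ring]
    positivity
  have hrpos : 0 < r := by nlinarith [sq_nonneg m, hdet]
  have hrle : r ≤ (c ^ 2 * k) ^ 2 * E := by linarith
  have hmle : m ≤ c ^ 2 * k * E := by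
    refine le_of_sq_le_sq ?_ (by positivity)
    calc m ^ 2 ≤ E * r := by linarith
      _ ≤ E * ((c ^ 2 * k) ^ 2 * E) := by gcongr
      _ = (c ^ 2 * k * E) ^ 2 := by ring
  have hmlt : m < c * k * E := by
    have : 0 < c * k * E * (1 - c) := by
      have := sub_pos.2 hc
      positivity
    linarith
  have hfactor : (1 - c) * (2 * c * (c * k * E - m) + r * (1 + c)) ≤ 0 := by
    linear_combination hineq
  have hfactorpos : 0 < (1 - c) * (2 * c * (c * k * E - m) + r * (1 + c)) := by
    have := sub_pos.2 hmlt
    have := sub_pos.2 hc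
    positivity
  exact hfactor.not_gt hfactorpos

lemma dist_le_of_leg_apex
    (h : IsMinIsoscelesContainer (obliquePt S P R c 0) (obliquePt S P R 0 0)
      (obliquePt S P R a k) S P R)
    (hleg : dist P S = dist P R) (hang : inner ℝ (S - P) (R - P) ≤ 0)
    (hc0 : 0 < c) (hc : c ≤ 1) (ha : 0 ≤ a) (hk : 0 < k) (hak : a + k ≤ 1) :
    dist (obliquePt S P R 0 0) (obliquePt S P R a k) ≤
      dist (obliquePt S P R 0 0) (obliquePt S P R c 0) := by
  by_contra! hlt
  have hE := (abs_nonneg _).trans_lt (abs_inner_lt_dist_sq h.1.1 hleg)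
  have hineq := h.leg_ineq_of_le_dist hleg hc0 hk hlt.le
  have hext := h.rev.dist_sq_le_of_abs_cross (mul_pos (sub_pos.2 hc0) hk)
    ((abs_cross_rev _ _ _).trans (abs_cross_obliquePt_leg a hc0.le hk.le)) hlt.le
  have hltsq := pow_lt_pow_left₀ hlt dist_nonneg two_ne_zero
  simp only [dist_obliquePt_sq _ _ _ _ hleg] at hext hltsq
  set E := dist P S ^ 2
  set I := inner ℝ (S - P) (R - P)
  set r := E * (0 - a) ^ 2 + 2 * I * (0 - a) * (0 - k) + E * (0 - k) ^ 2 with hr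
  have hrle : r ≤ E := by
    have hprod : 0 ≤ a * k * (E - I) := by
      have := sub_nonneg.2 (hang.trans hE.le)
      positivity
    have hsum : E * (a + k) ^ 2 ≤ E := mul_le_of_le_one_right hE.le (pow_le_one₀ (by linarith) hak)
    linarith
  have hk1 : k = 1 := by
    refine le_antisymm (by linarith) ((one_le_sq_iff₀ hk.le).1 ?_)
    have hbound : (c ^ 2 * E) * 1 ≤ (c ^ 2 * E) * k ^ 2 := by
      linarith [mul_le_mul_of_nonneg_left hrle (sq_nonneg (c * k))]
    exact le_of_mul_le_mul_left hbound (by positivity)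
  obtain rfl : a = 0 := by linarith
  subst hk1
  have hc1 : c < 1 := lt_of_le_of_ne hc (by rintro rfl; linarith)
  have hcI : 0 ≤ c * (1 - c) * -I := by
    have := sub_pos.2 hc1
    have := neg_nonneg.2 hang
    positivity
  linarith [mul_pos hE (sq_pos_of_pos (sub_pos.2 hc1))]

lemma dist_lt_of_leg
    (h : IsMinIsoscelesContainer (obliquePt S P R c 0) (obliquePt S P R c' 0)
      (obliquePt S P R 0 k) S P R)
    (hleg : dist P S = dist P R) (hang : inner ℝ (S - P) (R - P) ≤ 0)
    (hc' : 0 < c') (hcc' : c' < c) (hc : c ≤ 1) (hk : 0 < k) (hk1 : k ≤ 1) :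
    dist (obliquePt S P R c' 0) (obliquePt S P R 0 k) <
      dist (obliquePt S P R c' 0) (obliquePt S P R c 0) := by
  by_contra! hle
  have hE := (abs_nonneg _).trans_lt (abs_inner_lt_dist_sq h.1.1 hleg)
  have hineq := h.leg_ineq_of_le_dist hleg hcc' hk hle
  set E := dist P S ^ 2
  set I := inner ℝ (S - P) (R - P)
  have hI : 2 * k * -I * (k * (c ^ 2 - c' ^ 2)) ≤ 2 * k * -I * c := by
    have : 0 ≤ -I := by linarith
    gcongr
    nlinarith
  have hE' : 2 * k * (c - c') * (c * c' + k ^ 2) < c ^ 2 + k ^ 2 := by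
    have hbound : (c - c') * (c * c' + k ^ 2) < c := by
      have hk2 : (c - c') * k ^ 2 ≤ c - c' :=
        mul_le_of_le_one_right (by linarith) (pow_le_one₀ hk.le hk1)
      have hc2 : c ^ 2 * c' ≤ c' := mul_le_of_le_one_left hc'.le (pow_le_one₀ (by linarith) hc)
      have hcc'2 : 0 < c * c' ^ 2 := mul_pos (hc'.trans hcc') (sq_pos_of_pos hc')
      linarith
    nlinarith [sq_nonneg (c - k)]
  nlinarith

end IsMinIsoscelesContainer

lemma exists_insert_pair_eq {α : Type*} {A B C x y : α} (hx : x ∈ ({A, B, C} : Set α))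
    (hy : y ∈ ({A, B, C} : Set α)) (hxy : x ≠ y) : ∃ z, ({x, y, z} : Set α) = {A, B, C} := by
  rcases hx with rfl | rfl | rfl <;> rcases hy with rfl | rfl | rfl
  exacts [absurd rfl hxy, ⟨C, rfl⟩, ⟨B, by grind⟩, ⟨C, by grind⟩, absurd rfl hxy, ⟨A, by grind⟩,
    ⟨B, by grind⟩, ⟨A, by grind⟩, absurd rfl hxy]

lemma affineIndependent_iff_of_insert_eq {k V P : Type*} [DivisionRing k] [AddCommGroup V]
    [Module k V] [AddTorsor V P] {p₁ p₂ p₃ q₁ q₂ q₃ : P}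
    (h : ({p₁, p₂, p₃} : Set P) = {q₁, q₂, q₃}) :
    AffineIndependent k ![p₁, p₂, p₃] ↔ AffineIndependent k ![q₁, q₂, q₃] := by
  rw [affineIndependent_iff_not_collinear_set, affineIndependent_iff_not_collinear_set, h]

lemma coord_triBasis_symm {S P R : Pt} (h : AffineIndependent ℝ ![S, P, R])
    (h' : AffineIndependent ℝ ![R, P, S]) (x : Pt) :
    (triBasis h').coord 2 x = (triBasis h).coord 0 x := by
  obtain ⟨a, k, rfl⟩ := exists_eq_obliquePt h x
  rw [coord_obliquePt, ← obliquePt_swap, coord_obliquePt]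
  rfl

namespace IsMinIsoscelesContainer

variable {A B C S P R : Pt} {a c c' k : ℝ}

lemma add_eq_one_of_leg
    (h : IsMinIsoscelesContainer (obliquePt S P R c 0) (obliquePt S P R c' 0)
      (obliquePt S P R a k) S P R) (hcc' : c' < c) (hc : c < 1) : a + k = 1 := by
  obtain ⟨x, rfl | rfl | rfl, hx⟩ := h.exists_mem_side 1 <;> rw [coord_obliquePt] at hx
  · exact absurd (show 1 - c - 0 = 0 from hx) (by linarith)
  · exact absurd (show 1 - c' - 0 = 0 from hx) (by linarith)
  · linarith [show 1 - a - k = 0 from hx]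

lemma eq_zero_of_leg
    (h : IsMinIsoscelesContainer (obliquePt S P R c 0) (obliquePt S P R c' 0)
      (obliquePt S P R a k) S P R) (hc' : 0 < c') (hcc' : c' < c) : a = 0 := by
  obtain ⟨x, rfl | rfl | rfl, hx⟩ := h.exists_mem_side 0 <;> rw [coord_obliquePt] at hx
  · exact absurd (show c = 0 from hx) (by linarith)
  · exact absurd (show c' = 0 from hx) (by linarith)
  · exact hx

lemma eq_one_and_eq_zero_of_leg
    (h : IsMinIsoscelesContainer (obliquePt S P R c 0) (obliquePt S P R c' 0)
      (obliquePt S P R a k) S P R)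
    (hleg : dist P S = dist P R) (hang : inner ℝ (S - P) (R - P) ≤ 0) (hc'0 : 0 ≤ c')
    (hcc' : c' < c) (hc : c ≤ 1) (ha : 0 ≤ a) (hk : 0 < k) (hak : a + k ≤ 1) :
    (c = 1 ∧ c' = 0) ∧ a + k = 1 := by
  have hle : dist (obliquePt S P R c' 0) (obliquePt S P R a k) ≤
      dist (obliquePt S P R c' 0) (obliquePt S P R c 0) := by
    obtain rfl | hc'pos := hc'0.eq_or_lt
    · exact h.dist_le_of_leg_apex hleg hang hcc' hc ha hk hak
    · obtain rfl := h.eq_zero_of_leg hc'pos hcc'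
      exact (h.dist_lt_of_leg hleg hang hc'pos hcc' hc hk (by linarith)).le
  obtain rfl | hc1 := hc.eq_or_lt
  · obtain ⟨hc'eq, hakeq⟩ := h.eq_zero_and_add_eq_one_of_leg_end hleg hang hc'0 hcc' hk hak hle
    exact ⟨⟨rfl, hc'eq⟩, hakeq⟩
  have hakeq := h.add_eq_one_of_leg hcc' hc1
  exfalso
  obtain rfl | hc'pos := hc'0.eq_or_lt
  · obtain rfl : a = 1 - k := by linarith
    exact hc1.not_ge (h.one_le_of_leg_apex hleg hcc' hk hle)
  · obtain rfl := h.eq_zero_of_leg hc'pos hcc'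
    obtain rfl : k = 1 := by linarith
    have hE := (abs_nonneg _).trans_lt (abs_inner_lt_dist_sq h.1.1 hleg)
    have hsq := pow_le_pow_left₀ dist_nonneg hle 2
    simp only [dist_obliquePt_sq _ _ _ _ hleg] at hsq
    have hlt : dist P S ^ 2 * (c' - c) ^ 2 < dist P S ^ 2 * 1 := by
      gcongr
      nlinarith
    linarith [mul_nonneg hc'0 (neg_nonneg.2 hang), mul_nonneg hE.le (sq_nonneg c')]

lemma eq_mid_of_coord_base {U V W : Pt} (h : IsMinIsoscelesContainer U V W S P R)
    (hUVW : AffineIndependent ℝ ![U, V, W])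
    (hleg : dist P S = dist P R) (hang : inner ℝ (S - P) (R - P) ≤ 0)
    (hU : (triBasis h.1.1).coord 1 U = 0) (hW : (triBasis h.1.1).coord 1 W = 0)
    (hle : dist V W ≤ dist V U) : V = P ∧ (U = S ∨ U = R) ∧ W ∈ segment ℝ S R := by
  obtain ⟨u, s, rfl⟩ := exists_eq_obliquePt h.1.1 U
  obtain ⟨a, k, rfl⟩ := exists_eq_obliquePt h.1.1 V
  obtain ⟨w, s', rfl⟩ := exists_eq_obliquePt h.1.1 W
  rw [coord_obliquePt] at hU hW
  obtain rfl : u = 1 - s := by linarith [show 1 - u - s = 0 from hU]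
  obtain rfl : w = 1 - s' := by linarith [show 1 - w - s' = 0 from hW]
  have hss' : s ≠ s' := by
    rintro rfl
    exact hUVW.injective.ne (show (0 : Fin 3) ≠ 2 by decide) rfl
  obtain ⟨hUmem, hVmem, hWmem⟩ := tri_subset_tri_iff.1 h.1.2.2
  rw [obliquePt_mem_tri_iff h.1.1] at hUmem hVmem hWmem
  have hlt : a + k < 1 := by
    refine lt_of_le_of_ne hVmem.2.2 fun hak => affineIndependent_iff_cross_ne_zero.1 hUVW ?_
    obtain rfl : a = 1 - k := by linarith
    rw [cross_obliquePt]
    ring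
  obtain ⟨⟨rfl, rfl⟩, hs⟩ := h.eq_obliquePt_zero_of_mem_base hleg hang
    ⟨hUmem.2.1, by linarith [hUmem.1]⟩ hss' hVmem.1 hVmem.2.1 hlt hle
  refine ⟨obliquePt_zero_zero, ?_, obliquePt_mem_segment hWmem.1 hWmem.2.1 (by ring)⟩
  obtain rfl | rfl := hs
  · exact Or.inl (by rw [sub_zero, obliquePt_one_zero])
  · exact Or.inr (by rw [sub_self, obliquePt_zero_one])

lemma eq_mid_of_coord_leg {U V W : Pt} (h : IsMinIsoscelesContainer U V W S P R)
    (hUVW : AffineIndependent ℝ ![U, V, W])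
    (hleg : dist P S = dist P R) (hang : inner ℝ (S - P) (R - P) ≤ 0)
    (hU : (triBasis h.1.1).coord 2 U = 0) (hV : (triBasis h.1.1).coord 2 V = 0)
    (hlt : (triBasis h.1.1).coord 0 V < (triBasis h.1.1).coord 0 U) :
    V = P ∧ U = S ∧ W ∈ segment ℝ S R := by
  obtain ⟨c, k₁, rfl⟩ := exists_eq_obliquePt h.1.1 U
  obtain ⟨c', k₂, rfl⟩ := exists_eq_obliquePt h.1.1 V
  obtain ⟨a, k, rfl⟩ := exists_eq_obliquePt h.1.1 W
  rw [coord_obliquePt] at hU hV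
  rw [coord_obliquePt, coord_obliquePt] at hlt
  obtain rfl : k₁ = 0 := hU
  obtain rfl : k₂ = 0 := hV
  obtain ⟨hUmem, hVmem, hWmem⟩ := tri_subset_tri_iff.1 h.1.2.2
  rw [obliquePt_mem_tri_iff h.1.1] at hUmem hVmem hWmem
  have hk : 0 < k := by
    refine lt_of_le_of_ne hWmem.2.1 ?_
    rintro rfl
    refine affineIndependent_iff_cross_ne_zero.1 hUVW ?_
    rw [cross_obliquePt]
    ring
  obtain ⟨⟨rfl, rfl⟩, hak⟩ := h.eq_one_and_eq_zero_of_leg hleg hang hVmem.1 hlt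
    (by linarith [hUmem.2.2]) hWmem.1 hk hWmem.2.2
  exact ⟨obliquePt_zero_zero, obliquePt_one_zero, obliquePt_mem_segment hWmem.1 hk.le hak⟩

lemma exists_of_coord_base (h : IsMinIsoscelesContainer A B C S P R)
    (hABC : AffineIndependent ℝ ![A, B, C]) (hleg : dist P S = dist P R)
    (hang : inner ℝ (S - P) (R - P) ≤ 0) {x y : Pt} (hx : x ∈ ({A, B, C} : Set Pt))
    (hy : y ∈ ({A, B, C} : Set Pt)) (hxy : x ≠ y) (hx0 : (triBasis h.1.1).coord 1 x = 0)
    (hy0 : (triBasis h.1.1).coord 1 y = 0) :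
    ∃ U W, ({U, P, W} : Set Pt) = {A, B, C} ∧ (U = S ∨ U = R) ∧ W ∈ segment ℝ S R := by
  obtain ⟨z, hxyz⟩ := exists_insert_pair_eq hx hy hxy
  wlog hle : dist z y ≤ dist z x generalizing x y
  · exact this hy hx hxy.symm hy0 hx0 ((Set.insert_comm _ _ _).trans hxyz) (le_of_not_ge hle)
  rw [Set.pair_comm] at hxyz
  obtain ⟨rfl, hU, hW⟩ := (h.congr hxyz).eq_mid_of_coord_base
    ((affineIndependent_iff_of_insert_eq hxyz).2 hABC) hleg hang hx0 hy0 hle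
  exact ⟨x, y, hxyz, hU, hW⟩

lemma exists_of_coord_leg (h : IsMinIsoscelesContainer A B C S P R)
    (hABC : AffineIndependent ℝ ![A, B, C]) (hleg : dist P S = dist P R)
    (hang : inner ℝ (S - P) (R - P) ≤ 0) {x y : Pt} (hx : x ∈ ({A, B, C} : Set Pt))
    (hy : y ∈ ({A, B, C} : Set Pt)) (hxy : x ≠ y) (hx0 : (triBasis h.1.1).coord 2 x = 0)
    (hy0 : (triBasis h.1.1).coord 2 y = 0) :
    ∃ W, ({S, P, W} : Set Pt) = {A, B, C} ∧ W ∈ segment ℝ S R := by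
  obtain ⟨z, hxyz⟩ := exists_insert_pair_eq hx hy hxy
  wlog hle : (triBasis h.1.1).coord 0 y ≤ (triBasis h.1.1).coord 0 x generalizing x y
  · exact this hy hx hxy.symm hy0 hx0 ((Set.insert_comm _ _ _).trans hxyz) (le_of_not_ge hle)
  have hlt : (triBasis h.1.1).coord 0 y < (triBasis h.1.1).coord 0 x := by
    refine lt_of_le_of_ne hle fun heq => hxy ((triBasis h.1.1).ext_elem fun i => ?_)
    have hxsum := (triBasis h.1.1).sum_coord_apply_eq_one x
    have hysum := (triBasis h.1.1).sum_coord_apply_eq_one y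
    rw [Fin.sum_univ_three] at hxsum hysum
    have h1 : (triBasis h.1.1).coord 1 x = (triBasis h.1.1).coord 1 y := by linarith
    fin_cases i
    exacts [heq.symm, h1, hx0.trans hy0.symm]
  obtain ⟨rfl, rfl, hW⟩ := (h.congr hxyz).eq_mid_of_coord_leg
    ((affineIndependent_iff_of_insert_eq hxyz).2 hABC) hleg hang hx0 hy0 hlt
  exact ⟨z, hxyz, hW⟩

theorem exists_mem_base (h : IsMinIsoscelesContainer A B C S P R)
    (hABC : AffineIndependent ℝ ![A, B, C]) (hleg : dist P S = dist P R)
    (hang : inner ℝ (S - P) (R - P) ≤ 0) :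
    ∃ U W, ({U, P, W} : Set Pt) = {A, B, C} ∧ (U = S ∨ U = R) ∧ W ∈ segment ℝ S R := by
  obtain ⟨i, x, hx, y, hy, hxy, hx0, hy0⟩ := h.exists_two_mem_side
  fin_cases i
  · have h' := h.swap_left.swap_right.swap_left
    obtain ⟨W, hW, hmem⟩ := h'.exists_of_coord_leg hABC hleg.symm
      (real_inner_comm (S - P) (R - P) ▸ hang) hx hy hxy
      ((coord_triBasis_symm h.1.1 h'.1.1 x).trans hx0)
      ((coord_triBasis_symm h.1.1 h'.1.1 y).trans hy0)
    exact ⟨R, W, hW, Or.inr rfl, segment_symm ℝ R S ▸ hmem⟩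
  · exact h.exists_of_coord_base hABC hleg hang hx hy hxy hx0 hy0
  · obtain ⟨W, hW, hmem⟩ := h.exists_of_coord_leg hABC hleg hang hx hy hxy hx0 hy0
    exact ⟨S, W, hW, Or.inl rfl, hmem⟩

end IsMinIsoscelesContainer

/-! ### Obtuse containers -/

lemma pi_div_two_lt_angle_iff {V : Type*} [NormedAddCommGroup V] [InnerProductSpace ℝ V]
    {S P R : V} : π / 2 < ∠ S P R ↔ inner ℝ (S - P) (R - P) < 0 := by
  rw [EuclideanGeometry.angle, InnerProductGeometry.angle, vsub_eq_sub, vsub_eq_sub, ← not_le,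
    Real.arccos_le_pi_div_two, not_le]
  refine ⟨fun h => by_contra fun h0 => h.not_ge (div_nonneg (not_lt.1 h0) (by positivity)),
    fun h => div_neg_of_neg_of_pos h (mul_pos ?_ ?_)⟩ <;>
  · rw [norm_pos_iff]
    rintro h0
    simp [h0] at h

lemma IsIsosceles.dist_eq_of_obtuse {S P R : Pt} (h : IsIsosceles S P R)
    (hobt : inner ℝ (S - P) (R - P) < 0) : dist P S = dist P R := by
  have hlaw : dist R S ^ 2 = dist P S ^ 2 + dist P R ^ 2 - 2 * inner ℝ (S - P) (R - P) := by
    simp only [dist_sq_eq_coords, inner_eq_coords, PiLp.sub_apply]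
    ring
  rcases h with h | h | h
  · rw [h] at hlaw
    linarith [sq_nonneg (dist P S)]
  · rw [h, dist_comm S P] at hlaw
    linarith [sq_nonneg (dist P R)]
  · rw [dist_comm P S, h]

lemma tri_rev (S P R : Pt) : tri R P S = tri S P R := by
  rw [← tri_swap_right, ← tri_swap_left, tri_swap_right]

namespace IsMinIsoscelesContainer

variable {A B C U V W S P R : Pt}

lemma exists_eq_tri_secondKindVertex (h : IsMinIsoscelesContainer A B C S P R)
    (hABC : AffineIndependent ℝ ![A, B, C]) (hleg : dist P S = dist P R)
    (hang : inner ℝ (S - P) (R - P) ≤ 0) :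
    ∃ U W, ({U, P, W} : Set Pt) = {A, B, C} ∧ dist P W ≤ dist P U ∧
      tri S P R = tri U P (secondKindVertex U P W) := by
  obtain ⟨U, W, hUW, hU, hW⟩ := h.exists_mem_base hABC hleg hang
  have hSR : S ≠ R := h.1.1.injective.ne (show (0 : Fin 3) ≠ 2 by decide)
  obtain ⟨Z, htri, hWZ, hZU, hdist⟩ : ∃ Z, tri S P R = tri U P Z ∧ W ∈ segment ℝ U Z ∧ Z ≠ U ∧
      dist P U = dist P Z := by
    rcases hU with rfl | rfl
    · exact ⟨R, rfl, hW, hSR.symm, hleg⟩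
    · exact ⟨S, (tri_rev _ _ _).symm, segment_symm ℝ S U ▸ hW, hSR, hleg.symm⟩
  have hWU : W ≠ U :=
    ((affineIndependent_iff_of_insert_eq hUW).2 hABC).injective.ne
      (show (2 : Fin 3) ≠ 0 by decide)
  have hray : OnRay U W Z := (mem_segment_iff_wbtw.1 hWZ).sameRay_vsub_left
  refine ⟨U, W, hUW, ?_, ?_⟩
  · have hball := (convex_closedBall P (dist P U)).segment_subset
      (Metric.mem_closedBall'.2 le_rfl) (Metric.mem_closedBall'.2 hdist.ge)
    exact Metric.mem_closedBall'.1 (hball hWZ)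
  · rwa [← hray.eq_secondKindVertex hWU hZU (by rw [dist_comm Z, dist_comm U P, hdist])]

lemma eq_tri_secondKindVertex_of_obtuse (h : IsMinIsoscelesContainer A B C S P R)
    (hABC : AffineIndependent ℝ ![A, B, C]) (hab : dist B C < dist C A)
    (hbc : dist C A < dist A B) (hobt : π / 2 < ∠ S P R) :
    tri S P R = tri A C (secondKindVertex A C B) ∨
      tri S P R = tri A B (secondKindVertex A B C) ∨
        tri S P R = tri B A (secondKindVertex B A C) := by
  have hang := pi_div_two_lt_angle_iff.1 hobt
  obtain ⟨U, W, hUW, hle, htri⟩ :=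
    h.exists_eq_tri_secondKindVertex hABC (h.1.2.1.dist_eq_of_obtuse hang) hang.le
  have hinj := ((affineIndependent_iff_of_insert_eq hUW).2 hABC).injective
  have hUP : U ≠ P := hinj.ne (show (0 : Fin 3) ≠ 1 by decide)
  have hUW' : U ≠ W := hinj.ne (show (0 : Fin 3) ≠ 2 by decide)
  have hPW : P ≠ W := hinj.ne (show (1 : Fin 3) ≠ 2 by decide)
  have hU : U ∈ ({A, B, C} : Set Pt) := hUW ▸ by simp
  have hP : P ∈ ({A, B, C} : Set Pt) := hUW ▸ by simp
  have hW : W ∈ ({A, B, C} : Set Pt) := hUW ▸ by simp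
  simp only [dist_comm C A, dist_comm A B] at hab hbc
  -- The apex determines `U` as the other endpoint of the longer side through it.
  rcases hP with rfl | rfl | rfl <;> rcases hU with rfl | rfl | rfl <;>
    rcases hW with rfl | rfl | rfl <;> grind [dist_comm]

end IsMinIsoscelesContainer

lemma abs_cross_eq_of_tri_eq {A B C S P R : Pt} (h : tri A B C = tri S P R) :
    |cross A B C| = |cross S P R| :=
  le_antisymm (triArea_le_triArea_iff.1 (by rw [triArea, triArea, h]))
    (triArea_le_triArea_iff.1 (by rw [triArea, triArea, h]))

lemma subset_vertices_of_tri_eq {A B C S P R : Pt} (hABC : AffineIndependent ℝ ![A, B, C])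
    (h : tri A B C = tri S P R) : ({A, B, C} : Set Pt) ⊆ {S, P, R} := by
  have hextreme (i : Fin 3) : triBasis hABC i ∈ ({S, P, R} : Set Pt) := by
    refine extremePoints_convexHull_subset (𝕜 := ℝ) ?_
    rw [← tri.eq_1, ← h, ← convexHull_range_triBasis hABC]
    exact mem_extremePoints_convexHull _ i
  rintro x (rfl | rfl | rfl)
  exacts [hextreme 0, hextreme 1, hextreme 2]

lemma obtuse_of_tri_eq {S P R U V W : Pt} (hSPR : AffineIndependent ℝ ![S, P, R])
    (htri : tri S P R = tri U V W) (hobt : π / 2 < ∠ U V W) :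
    π / 2 < ∠ P S R ∨ π / 2 < ∠ S P R ∨ π / 2 < ∠ S R P := by
  have hsub := subset_vertices_of_tri_eq hSPR htri
  have hSP : S ≠ P := hSPR.injective.ne (show (0 : Fin 3) ≠ 1 by decide)
  have hSR : S ≠ R := hSPR.injective.ne (show (0 : Fin 3) ≠ 2 by decide)
  have hPR : P ≠ R := hSPR.injective.ne (show (1 : Fin 3) ≠ 2 by decide)
  rcases hsub (show S ∈ _ by simp) with rfl | rfl | rfl <;>
    rcases hsub (show P ∈ _ by simp) with rfl | rfl | rfl <;>
    rcases hsub (show R ∈ _ by simp) with rfl | rfl | rfl <;>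
    simp_all [angle_comm]

lemma inner_secondKindVertex {U V W : Pt} (hWU : W ≠ U) :
    2 * inner ℝ (U - V) (secondKindVertex U V W - V) * dist W U ^ 2 =
      2 * dist V U ^ 2 * dist W U ^ 2 - (dist V U ^ 2 + dist W U ^ 2 - dist V W ^ 2) ^ 2 := by
  have h0 : dist W U ^ 2 ≠ 0 := pow_ne_zero 2 (dist_ne_zero.2 hWU)
  rw [secondKindVertex_eq_lineMap]
  set τ := (dist V U ^ 2 + dist W U ^ 2 - dist V W ^ 2) / dist W U ^ 2
  have hτ : dist V U ^ 2 + dist W U ^ 2 - dist V W ^ 2 = τ * dist W U ^ 2 :=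
    (div_mul_cancel₀ _ h0).symm
  have hinner : 2 * inner ℝ (U - V) (AffineMap.lineMap U W τ - V) =
      2 * dist V U ^ 2 - τ * (dist V U ^ 2 + dist W U ^ 2 - dist V W ^ 2) := by
    simp only [AffineMap.lineMap_apply_module, inner_eq_coords, dist_sq_eq_coords, PiLp.sub_apply,
      PiLp.add_apply, PiLp.smul_apply, smul_eq_mul]
    ring
  rw [hinner, hτ]
  ring

namespace IsMinIsoscelesContainer

variable {A B C U V W U' V' W' S P R : Pt}

lemma mul_dist_le_of_eq_tri_secondKindVertex (h : IsMinIsoscelesContainer U V W S P R)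
    (hUVW : AffineIndependent ℝ ![U, V, W]) (htri : tri S P R = tri U V (secondKindVertex U V W))
    (hset : ({U', V', W'} : Set Pt) = {U, V, W}) (hle : dist V' W' ≤ dist V' U') :
    (dist V U ^ 2 + dist W U ^ 2 - dist V W ^ 2) * dist V' W' ≤ dist W U ^ 2 * dist V' U' := by
  have hWU : 0 < dist W U := dist_pos.2 (hUVW.injective.ne (show (2 : Fin 3) ≠ 0 by decide))
  have hcross : 0 < |cross U V W| := abs_pos.2 (affineIndependent_iff_cross_ne_zero.1 hUVW)
  have hbound := (h.congr hset).abs_cross_mul_dist_le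
    ((affineIndependent_iff_of_insert_eq hset).2 hUVW) hle
  set D := dist V U ^ 2 + dist W U ^ 2 - dist V W ^ 2
  have hcontainer : D * |cross U V W| ≤ dist W U ^ 2 * |cross S P R| := by
    have hlift : cross U V (secondKindVertex U V W) = D / dist W U ^ 2 * cross U V W := by
      rw [secondKindVertex_eq_lineMap, cross_swap_left V U, cross_lineMap_right,
        cross_swap_left U V, mul_neg, neg_neg]
    rw [abs_cross_eq_of_tri_eq htri, hlift, abs_mul, ← mul_assoc]
    gcongr
    rw [← div_le_iff₀' (by positivity)]
    exact le_abs_self _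
  rw [abs_cross_eq_of_tri_eq (by rw [tri, tri, hset] : tri U' V' W' = tri U V W)] at hbound
  refine le_of_mul_le_mul_right ?_ hcross
  calc D * dist V' W' * |cross U V W| = D * |cross U V W| * dist V' W' := by ring
    _ ≤ dist W U ^ 2 * |cross S P R| * dist V' W' := by gcongr
    _ = dist W U ^ 2 * (|cross S P R| * dist V' W') := by ring
    _ ≤ dist W U ^ 2 * (|cross U V W| * dist V' U') := by gcongr
    _ = dist W U ^ 2 * dist V' U' * |cross U V W| := by ring

lemma tri_ne_tri_secondKindVertex_left (h : IsMinIsoscelesContainer A B C S P R)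
    (hABC : AffineIndependent ℝ ![A, B, C]) (hab : dist B C < dist C A)
    (hbc : dist C A < dist A B) : tri S P R ≠ tri A B (secondKindVertex A B C) := by
  intro htri
  have hbound := h.mul_dist_le_of_eq_tri_secondKindVertex hABC htri (U' := B) (V' := A) (W' := C)
    (Set.insert_comm _ _ _) (by rw [dist_comm A C]; exact hbc.le)
  have ha : 0 ≤ dist B C := dist_nonneg
  rw [dist_comm B A, dist_comm A C] at hbound
  have hcancel : dist A B ^ 2 + dist C A ^ 2 - dist B C ^ 2 ≤ dist C A * dist A B :=
    le_of_mul_le_mul_right (by linarith) (ha.trans_lt hab)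
  nlinarith

lemma tri_ne_tri_secondKindVertex_right (h : IsMinIsoscelesContainer A B C S P R)
    (hABC : AffineIndependent ℝ ![A, B, C]) (hab : dist B C < dist C A)
    (hbc : dist C A < dist A B) : tri S P R ≠ tri B A (secondKindVertex B A C) := by
  intro htri
  have hbound := (h.congr (Set.insert_comm B A {C})).mul_dist_le_of_eq_tri_secondKindVertex
    (affineIndependent_swap_left.2 hABC) htri (U' := B) (V' := A) (W' := C) rfl
    (by rw [dist_comm A C]; exact hbc.le)
  have ha : 0 ≤ dist B C := dist_nonneg
  rw [dist_comm C B, dist_comm A C] at hbound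
  have hsq : dist B C ^ 2 < dist C A * (dist A B + dist C A) := by nlinarith
  linarith [mul_pos (sub_pos.2 hbc) (sub_pos.2 hsq)]

lemma pi_div_two_lt_angle_secondKindVertex (h : IsMinIsoscelesContainer A B C S P R)
    (hABC : AffineIndependent ℝ ![A, B, C]) (hab : dist B C < dist C A)
    (htri : tri S P R = tri A C (secondKindVertex A C B)) :
    π / 2 < ∠ A C (secondKindVertex A C B) := by
  have hset : ({A, C, B} : Set Pt) = {A, B, C} := by rw [Set.pair_comm]
  have hBA : B ≠ A := hABC.injective.ne (show (1 : Fin 3) ≠ 0 by decide)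
  have hbound := (h.congr hset).mul_dist_le_of_eq_tri_secondKindVertex
    (affineIndependent_swap_right.2 hABC) htri (U' := A) (V' := C) (W' := B) rfl
    (by rw [dist_comm C B]; exact hab.le)
  have hinner := inner_secondKindVertex (V := C) hBA
  rw [dist_comm C B, dist_comm B A] at hbound hinner
  have ha : 0 < dist B C := dist_pos.2 (hABC.injective.ne (show (1 : Fin 3) ≠ 2 by decide))
  have hc : dist B C * (dist B C + dist C A) ≤ dist A B ^ 2 :=
    le_of_mul_le_mul_left (by linarith) (sub_pos.2 hab)
  have hneg : 2 * dist C A ^ 2 * dist A B ^ 2 <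
      (dist C A ^ 2 + dist A B ^ 2 - dist B C ^ 2) ^ 2 := by
    have hb : 0 < dist C A := ha.trans hab
    linarith [sq_nonneg (dist A B ^ 2 - dist B C * (dist B C + dist C A)),
      mul_nonneg (mul_pos ha hb).le (sub_nonneg.2 hc),
      mul_pos (pow_pos hb 2) (mul_pos (add_pos ha hb) (sub_pos.2 hab))]
  rw [pi_div_two_lt_angle_iff]
  nlinarith

end IsMinIsoscelesContainer

theorem statement3_general (A B C B₁ C₁ C₂ S P R : Pt)
    (hABC : AffineIndependent ℝ ![A, B, C])
    (hab : dist B C < dist C A) (hbc : dist C A < dist A B)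
    (hB₁ray : OnRay A B B₁) (hB₁ne : B₁ ≠ A) (hB₁dist : dist B₁ C = dist C A)
    (hC₁ray : OnRay A C C₁) (hC₁ne : C₁ ≠ A) (hC₁dist : dist B C₁ = dist A B)
    (hC₂ray : OnRay B C C₂) (hC₂ne : C₂ ≠ B) (hC₂dist : dist A C₂ = dist A B)
    (hmin : IsMinIsoscelesContainer A B C S P R) :
    (π / 2 < ∠ P S R ∨ π / 2 < ∠ S P R ∨ π / 2 < ∠ S R P) ↔
      (tri S P R = tri A B₁ C ∨ tri S P R = tri A B C₁ ∨
        tri S P R = tri A B C₂) := by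
  have hBA : B ≠ A := hABC.injective.ne (show (1 : Fin 3) ≠ 0 by decide)
  have hCA : C ≠ A := hABC.injective.ne (show (2 : Fin 3) ≠ 0 by decide)
  have hCB : C ≠ B := hABC.injective.ne (show (2 : Fin 3) ≠ 1 by decide)
  have hB₁ := hB₁ray.eq_secondKindVertex hBA hB₁ne (hB₁dist.trans (dist_comm C A))
  have hC₁ := hC₁ray.eq_secondKindVertex hCA hC₁ne ((dist_comm C₁ B).trans hC₁dist)
  have hC₂ := hC₂ray.eq_secondKindVertex hCB hC₂ne
    (by rw [dist_comm C₂, hC₂dist, dist_comm])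
  rw [← tri_swap_right A B₁ C, ← tri_swap_left A B C₂, hB₁, hC₁, hC₂]
  refine ⟨?_, ?_⟩
  · rintro (hobt | hobt | hobt)
    · rw [← tri_swap_left S P R]
      exact hmin.swap_left.eq_tri_secondKindVertex_of_obtuse hABC hab hbc hobt
    · exact hmin.eq_tri_secondKindVertex_of_obtuse hABC hab hbc hobt
    · rw [← tri_swap_right S P R]
      exact hmin.swap_right.eq_tri_secondKindVertex_of_obtuse hABC hab hbc hobt
  · rintro (htri | htri | htri)
    · exact obtuse_of_tri_eq hmin.1.1 htri
        (hmin.pi_div_two_lt_angle_secondKindVertex hABC hab htri)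
    · exact (hmin.tri_ne_tri_secondKindVertex_left hABC hab hbc htri).elim
    · exact (hmin.tri_ne_tri_secondKindVertex_right hABC hab hbc htri).elim

/-- a minimum area isosceles container `S P R` of an acute
triangle `A B C` with side lengths `a < b < c` is obtuse if and only if it
equals one of the special containers of the second kind
`AB₁C`, `ABC₁`, `ABC₂`. -/
theorem statement3 (A B C B₁ C₁ C₂ S P R : Pt)
    (hABC : AffineIndependent ℝ ![A, B, C])
    (hab : dist B C < dist C A) (hbc : dist C A < dist A B)
    (hacute : ∠ B A C < π / 2 ∧ ∠ A B C < π / 2 ∧ ∠ A C B < π / 2)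
    (hB₁ray : OnRay A B B₁) (hB₁ne : B₁ ≠ A) (hB₁dist : dist B₁ C = dist C A)
    (hC₁ray : OnRay A C C₁) (hC₁ne : C₁ ≠ A) (hC₁dist : dist B C₁ = dist A B)
    (hC₂ray : OnRay B C C₂) (hC₂ne : C₂ ≠ B) (hC₂dist : dist A C₂ = dist A B)
    (hmin : IsMinIsoscelesContainer A B C S P R) :
    (π / 2 < ∠ P S R ∨ π / 2 < ∠ S P R ∨ π / 2 < ∠ S R P) ↔
      (tri S P R = tri A B₁ C ∨ tri S P R = tri A B C₁ ∨
        tri S P R = tri A B C₂) :=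
  statement3_general A B C B₁ C₁ C₂ S P R hABC hab hbc hB₁ray hB₁ne hB₁dist hC₁ray hC₁ne hC₁dist
    hC₂ray hC₂ne hC₂dist hmin
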